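/- Assume 2^ℵ₀ = ℵ₂. If (B_i)_{i ∈ I} is a family of pairwise disjoint nonempty Borel subsets of ℝ whose union is ℝ and each B_i is closed under addition, then the cardinality of I belongs to {1, 2, 3, ℵ₁, ℵ₂}. -/

import Mathlib

open Set Filter Topology

/-- A Borel set of reals that is closed under addition and not meagre contains an open interval. -/
lemma exists_Ioo_subset_of_add_mem {S : Set ℝ} (hS : MeasurableSet S) (hnm : ¬ IsMeagre S)
    (hadd : ∀ x ∈ S, ∀ y ∈ S, x + y ∈ S) : ∃ a b : ℝ, a < b ∧ Ioo a b ⊆ S := by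
  obtain ⟨U, hU, hSU⟩ := hS.residualEq_isOpen
  have hUne : U.Nonempty := by
    by_contra h
    rw [not_nonempty_iff_eq_empty] at h
    subst h
    apply hnm
    filter_upwards [hSU] with x hx
    exact fun hxS => hx.mp hxS
  obtain ⟨u, hu⟩ := hUne
  obtain ⟨r, hr, hball⟩ := Metric.isOpen_iff.mp hU u hu
  refine ⟨2 * u - r, 2 * u + r, by linarith, fun t ht => ?_⟩
  have htu : t - u ∈ U := by
    apply hball
    rw [Metric.mem_ball, Real.dist_eq, abs_lt]
    constructor <;> linarith [ht.1, ht.2]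
  have hcont : Continuous fun x : ℝ => t - x := by fun_prop
  have hopen : IsOpenMap fun x : ℝ => t - x := (Homeomorph.subLeft t).isOpenMap
  have hgood : ∀ᶠ x in residual ℝ, (x ∈ S ↔ x ∈ U) ∧ (t - x ∈ S ↔ t - x ∈ U) := by
    filter_upwards [hSU, (tendsto_residual_of_isOpenMap hcont hopen).eventually hSU]
      with x hx hx'
    exact ⟨iff_of_eq hx, iff_of_eq hx'⟩
  obtain ⟨x, ⟨hxU, htxU⟩, hx, htx⟩ := (dense_of_mem_residual hgood).inter_open_nonempty
    (U ∩ (fun x => t - x) ⁻¹' U) (hU.inter (hU.preimage hcont)) ⟨u, hu, htu⟩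
  simpa using hadd x (hx.mpr hxU) (t - x) (htx.mpr htxU)

lemma natCast_mul_mem_of_add_mem {S : Set ℝ} (hadd : ∀ x ∈ S, ∀ y ∈ S, x + y ∈ S)
    {x : ℝ} (hx : x ∈ S) {n : ℕ} (hn : 0 < n) : (n : ℝ) * x ∈ S := by
  induction n, hn using Nat.le_induction with
  | base => simpa using hx
  | succ k _ ih =>
    have := hadd _ ih _ hx
    push_cast
    rwa [add_one_mul]

/-- In a countable cover of `ℝ` by pairwise disjoint Borel sets closed under addition, all positive
reals lie in a single piece. -/
lemma exists_Ioi_subset_of_countable {ι : Type*} [Countable ι] {B : ι → Set ℝ}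
    (hmeas : ∀ i, MeasurableSet (B i))
    (hdisj : Pairwise (Function.onFun Disjoint B))
    (hcover : (⋃ i, B i) = univ)
    (hadd : ∀ i, ∀ x ∈ B i, ∀ y ∈ B i, x + y ∈ B i) : ∃ i, Ioi 0 ⊆ B i := by
  obtain ⟨i, hi⟩ : ∃ i, ¬ IsMeagre (B i ∩ Ioi 0) := by
    by_contra! h
    have hun := isMeagre_iUnion h
    rw [← iUnion_inter, hcover, univ_inter] at hun
    exact not_isMeagre_of_isOpen isOpen_Ioi ⟨1, one_pos⟩ hun
  obtain ⟨a, b, hab, hsub⟩ := exists_Ioo_subset_of_add_mem ((hmeas i).inter measurableSet_Ioi) hi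
    fun x hx y hy => ⟨hadd i x hx.1 y hy.1, add_pos (mem_Ioi.mp hx.2) (mem_Ioi.mp hy.2)⟩
  refine ⟨i, fun x hx => ?_⟩
  rw [mem_Ioi] at hx
  obtain ⟨j, hj⟩ := mem_iUnion.mp (hcover.symm ▸ mem_univ x)
  obtain ⟨q, haq, hqb⟩ := exists_rat_btwn (div_lt_div_of_pos_right hab hx)
  obtain ⟨hqi, hqpos⟩ := hsub ⟨(div_lt_iff₀ hx).mp haq, (lt_div_iff₀ hx).mp hqb⟩
  have hq : 0 < q := by exact_mod_cast pos_of_mul_pos_left (mem_Ioi.mp hqpos) hx.le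
  lift q to ℚ≥0 using hq.le
  have hnum : 0 < q.num := NNRat.num_pos.mpr (by exact_mod_cast hq)
  have hmem := natCast_mul_mem_of_add_mem (hadd i) hqi q.den_pos
  have hq_eq : (q.den : ℝ) * (((q : ℚ) : ℝ) * x) = q.num * x := by
    rw [← mul_assoc]
    congr 1
    exact_mod_cast NNRat.den_mul_eq_num q
  rw [hq_eq] at hmem
  have hij : i = j := by
    by_contra hne
    exact disjoint_left.mp (hdisj hne) hmem (natCast_mul_mem_of_add_mem (hadd j) hj hnum)
  exact hij ▸ hj

/-- A countable partition of `ℝ` into Borel sets closed under addition has at most three pieces. -/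
lemma mk_le_three_of_countable {ι : Type*} [Countable ι] {B : ι → Set ℝ}
    (hmeas : ∀ i, MeasurableSet (B i))
    (hne : ∀ i, (B i).Nonempty)
    (hdisj : Pairwise (Function.onFun Disjoint B))
    (hcover : (⋃ i, B i) = univ)
    (hadd : ∀ i, ∀ x ∈ B i, ∀ y ∈ B i, x + y ∈ B i) : Cardinal.mk ι ≤ 3 := by
  obtain ⟨p, hp⟩ := exists_Ioi_subset_of_countable hmeas hdisj hcover hadd
  obtain ⟨n, hn⟩ := exists_Ioi_subset_of_countable (B := fun i => Neg.neg ⁻¹' B i)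
    (fun i => measurable_neg (hmeas i)) (fun i j hij => (hdisj hij).preimage _)
    (by rw [← preimage_iUnion, hcover, preimage_univ])
    (fun i x hx y hy => by
      rw [mem_preimage, neg_add]
      exact hadd i _ hx _ hy)
  obtain ⟨z, hz⟩ := mem_iUnion.mp (hcover.symm ▸ mem_univ (0 : ℝ))
  have heq : ∀ {i j : ι} {x : ℝ}, x ∈ B i → x ∈ B j → i = j := fun {i j x} hi hj => by
    by_contra hij
    exact disjoint_left.mp (hdisj hij) hi hj
  have hsurj : Function.Surjective ![p, n, z] := fun i => by
    obtain ⟨x, hx⟩ := hne i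
    rcases lt_trichotomy x 0 with h | rfl | h
    · have hxn : - -x ∈ B n := hn (neg_pos.mpr h)
      rw [neg_neg] at hxn
      exact ⟨1, heq hxn hx⟩
    · exact ⟨2, heq hz hx⟩
    · exact ⟨0, heq (hp h) hx⟩
  simpa using Cardinal.mk_le_of_surjective (Function.Surjective.comp hsurj Equiv.ulift.surjective)

/-- The hypothesis `2^ℵ₀ = ℵ₂` in any universe yields the same hypothesis in universe `0`. -/
lemma continuum_eq_aleph_two_of_universe.{u} (hc : Cardinal.continuum.{u} = Cardinal.aleph 2) :
    Cardinal.continuum.{0} = Cardinal.aleph 2 := by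
  apply Cardinal.lift_injective.{u, 0}
  simpa using hc

/-- Assume `2^ℵ₀ = ℵ₂`. If `ℝ` is partitioned into nonempty Borel sets closed under addition,
then the number of pieces belongs to `{1, 2, 3, ℵ₁, ℵ₂}`. -/
theorem stmt_15 (hc : Cardinal.continuum = Cardinal.aleph 2)
    {ι : Type} (B : ι → Set ℝ)
    (hmeas : ∀ i, MeasurableSet (B i))
    (hne : ∀ i, (B i).Nonempty)
    (hdisj : Pairwise (Function.onFun Disjoint B))
    (hcover : (⋃ i, B i) = Set.univ)
    (hadd : ∀ i, ∀ x ∈ B i, ∀ y ∈ B i, x + y ∈ B i) :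
    Cardinal.mk ι = 1 ∨ Cardinal.mk ι = 2 ∨ Cardinal.mk ι = 3 ∨
      Cardinal.mk ι = Cardinal.aleph 1 ∨ Cardinal.mk ι = Cardinal.aleph 2 := by
  rcases le_or_gt (Cardinal.mk ι) Cardinal.aleph0 with hle | hlt
  · have : Countable ι := Cardinal.mk_le_aleph0_iff.mp hle
    have h3 := mk_le_three_of_countable hmeas hne hdisj hcover hadd
    obtain ⟨i, -⟩ := mem_iUnion.mp (hcover.symm ▸ mem_univ (0 : ℝ))
    have h0 : Cardinal.mk ι ≠ 0 := Cardinal.mk_ne_zero_iff.mpr ⟨i⟩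
    obtain ⟨n, hn⟩ := Cardinal.lt_aleph0.mp (h3.trans_lt (Cardinal.natCast_lt_aleph0 (n := 3)))
    rw [hn] at h3 h0 ⊢
    norm_cast at h3 h0 ⊢
    have : n = 1 ∨ n = 2 ∨ n = 3 := by omega
    tauto
  · have h1 : Cardinal.aleph 1 ≤ Cardinal.mk ι := by
      rw [← Cardinal.succ_aleph0]
      exact Order.succ_le_of_lt hlt
    have h2 : Cardinal.mk ι ≤ Cardinal.aleph 2 := by
      choose f hf using hne
      have hinj : Function.Injective f := fun i j hij => by
        by_contra h
        exact disjoint_left.mp (hdisj h) (hf i) (hij ▸ hf j)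
      rw [← continuum_eq_aleph_two_of_universe hc, ← Cardinal.mk_real]
      exact Cardinal.mk_le_of_injective hinj
    rcases h1.eq_or_lt with h | h
    · exact Or.inr (Or.inr (Or.inr (Or.inl h.symm)))
    · refine Or.inr (Or.inr (Or.inr (Or.inr (h2.antisymm ?_))))
      have h12 : Cardinal.aleph 2 = Order.succ (Cardinal.aleph 1) := by
        rw [Cardinal.succ_aleph, one_add_one_eq_two]
      rw [h12]
      exact Order.succ_le_of_lt h
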